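/- Let V be a finite set, γ ∈ (0,1], and let F be a set function on subsets of V with F(∅) = 0 that is monotone non-decreasing and satisfies ∑_{j∈T} (F(S∪{j}) − F(S)) ≥ γ·(F(S∪T) − F(S)) for all disjoint S, T ⊆ V. Let S* ⊆ V with |S*| = k ≥ 1 and write L_max = F(S*) > 0. Let S_0 = ∅, S_{t+1} = S_t ∪ {j_t} with j_t maximizing F(S_t ∪ {j}) − F(S_t) over j ∈ V. Then for every ε with 0 < ε < L_max, the least t such that L_max − F(S_t) ≤ ε satisfies t ≤ ⌈(k/γ)·ln(L_max/ε)⌉; i.e., greedy selection run with stopping criterion F(S*) − F(S) ≤ ε returns a set of cardinality at most (k/γ)·ln(L_max/ε) + 1. -/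

import Mathlib

open scoped BigOperators

/-- Cardinality guarantee for greedy maximization of a `γ`-weakly submodular
monotone set function with accuracy stopping criterion `F(S*) − F(S) ≤ ε`:
the least `t` achieving accuracy `ε` satisfies `t ≤ ⌈(k/γ)·ln(L_max/ε)⌉`,
and the returned set has cardinality at most `(k/γ)·ln(L_max/ε) + 1`. -/
theorem greedy_cardinality_guarantee
    {V : Type*} [Fintype V] [DecidableEq V]
    (γ : ℝ) (hγ0 : 0 < γ) (hγ1 : γ ≤ 1)
    (F : Finset V → ℝ) (hF0 : F ∅ = 0)
    (hmono : ∀ S T : Finset V, S ⊆ T → F S ≤ F T)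
    (hweak : ∀ S T : Finset V, Disjoint S T →
      ∑ j ∈ T, (F (S ∪ {j}) - F S) ≥ γ * (F (S ∪ T) - F S))
    (k : ℕ) (hk : 1 ≤ k) (Sstar : Finset V) (hSstar : Sstar.card = k)
    (Lmax : ℝ) (hLmax : Lmax = F Sstar) (hLpos : 0 < Lmax)
    (Sseq : ℕ → Finset V) (hS0 : Sseq 0 = ∅)
    (hgreedy : ∀ t : ℕ, ∃ j : V, Sseq (t + 1) = Sseq t ∪ {j} ∧
      ∀ j' : V, F (Sseq t ∪ {j'}) - F (Sseq t) ≤ F (Sseq t ∪ {j}) - F (Sseq t))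
    (ε : ℝ) (hε0 : 0 < ε) (hεL : ε < Lmax) :
    ∃ t : ℕ, IsLeast {s : ℕ | Lmax - F (Sseq s) ≤ ε} t ∧
      (t : ℤ) ≤ ⌈((k : ℝ) / γ) * Real.log (Lmax / ε)⌉ ∧
      ((Sseq t).card : ℝ) ≤ ((k : ℝ) / γ) * Real.log (Lmax / ε) + 1 := by
  have hk0 : (0:ℝ) < k := by exact_mod_cast hk
  have hk1 : (1:ℝ) ≤ k := by exact_mod_cast hk
  have step : ∀ t, γ * (Lmax - F (Sseq t)) ≤ k * (F (Sseq (t+1)) - F (Sseq t)) := by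
    intro t
    obtain ⟨j, hj, hmax⟩ := hgreedy t
    have hd : 0 ≤ F (Sseq t ∪ {j}) - F (Sseq t) :=
      sub_nonneg.2 (hmono _ _ Finset.subset_union_left)
    have h1 := hweak (Sseq t) (Sstar \ Sseq t) Finset.disjoint_sdiff
    have h2 : Lmax ≤ F (Sseq t ∪ (Sstar \ Sseq t)) := by
      rw [hLmax, Finset.union_sdiff_self_eq_union]
      exact hmono _ _ Finset.subset_union_right
    have h3 := Finset.sum_le_card_nsmul (Sstar \ Sseq t)
      (fun i => F (Sseq t ∪ {i}) - F (Sseq t)) _ (fun i _ => hmax i)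
    rw [nsmul_eq_mul] at h3
    have h4 : ((Sstar \ Sseq t).card : ℝ) ≤ k := by
      rw [← hSstar]
      exact_mod_cast Finset.card_le_card Finset.sdiff_subset
    have h5 := mul_le_mul_of_nonneg_right h4 hd
    have h6 : γ * (Lmax - F (Sseq t)) ≤ γ * (F (Sseq t ∪ (Sstar \ Sseq t)) - F (Sseq t)) :=
      mul_le_mul_of_nonneg_left (by linarith) hγ0.le
    rw [hj]
    linarith
  have hq : 0 ≤ 1 - γ / k := by
    rw [sub_nonneg, div_le_one hk0]; linarith
  have bound : ∀ t : ℕ, Lmax - F (Sseq t) ≤ (1 - γ / k) ^ t * Lmax := by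
    intro t
    induction t with
    | zero => simp [hS0, hF0]
    | succ t ih =>
      have h1 : γ / k * (Lmax - F (Sseq t)) ≤ F (Sseq (t+1)) - F (Sseq t) := by
        rw [div_mul_eq_mul_div, div_le_iff₀ hk0]
        linarith [step t]
      have h2 := mul_le_mul_of_nonneg_left ih hq
      rw [pow_succ]
      linarith
  have hlog : 0 < Real.log (Lmax / ε) := Real.log_pos ((one_lt_div hε0).2 hεL)
  have hx : 0 < ((k : ℝ) / γ) * Real.log (Lmax / ε) := by positivity
  set x := ((k : ℝ) / γ) * Real.log (Lmax / ε) with hxdef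
  have hN : Lmax - F (Sseq ⌈x⌉₊) ≤ ε := by
    have h1 : (1 - γ / k) ^ ⌈x⌉₊ ≤ Real.exp (-(γ / k)) ^ ⌈x⌉₊ :=
      pow_le_pow_left₀ hq (Real.one_sub_le_exp_neg _) _
    rw [← Real.exp_nat_mul] at h1
    have h2 : γ / k * x = Real.log (Lmax / ε) := by
      rw [hxdef]; field_simp
    have h3 : γ / k * x ≤ γ / k * ⌈x⌉₊ :=
      mul_le_mul_of_nonneg_left (Nat.le_ceil x) (by positivity)
    have h4 : Real.exp (⌈x⌉₊ * -(γ / k)) ≤ Real.exp (-Real.log (Lmax / ε)) :=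
      Real.exp_le_exp.2 (by linarith)
    rw [Real.exp_neg, Real.exp_log (by positivity), inv_div] at h4
    have h5 := mul_le_mul_of_nonneg_right (h1.trans h4) hLpos.le
    rw [div_mul_cancel₀ _ hLpos.ne'] at h5
    exact (bound _).trans h5
  have hcard : ∀ t, (Sseq t).card ≤ t := by
    intro t
    induction t with
    | zero => simp [hS0]
    | succ t ih =>
      obtain ⟨j, hj, -⟩ := hgreedy t
      rw [hj]
      have := Finset.card_union_le (Sseq t) {j}
      simp only [Finset.card_singleton] at this
      omega
  classical
  have hex : ∃ s, Lmax - F (Sseq s) ≤ ε := ⟨_, hN⟩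
  have hle : Nat.find hex ≤ ⌈x⌉₊ := Nat.find_min' hex hN
  refine ⟨Nat.find hex, ⟨Nat.find_spec hex, fun s hs => Nat.find_min' hex hs⟩, ?_, ?_⟩
  · rw [← Int.natCast_ceil_eq_ceil hx.le]
    exact_mod_cast hle
  · have h1 : ((Sseq (Nat.find hex)).card : ℝ) ≤ (⌈x⌉₊ : ℝ) := by
      exact_mod_cast (hcard _).trans hle
    exact h1.trans (Nat.ceil_lt_add_one hx.le).le
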